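/- If U is Haar-random on U(d) with d ≥ 2, then E[U_{ij} U_{lm} Ū_{i₁j₁} Ū_{l₁m₁}] = (δ_{i,i₁}δ_{l,l₁}δ_{j,j₁}δ_{m,m₁} + δ_{i,l₁}δ_{l,i₁}δ_{j,m₁}δ_{m,j₁})/(d²−1) − (δ_{i,i₁}δ_{l,l₁}δ_{j,m₁}δ_{m,j₁} + δ_{i,l₁}δ_{l,i₁}δ_{j,j₁}δ_{m,m₁})/(d(d²−1)). -/

import Mathlib

open MeasureTheory Matrix


namespace HaarAux

variable {d : ℕ}

/-- the integrand -/
def F (j m j₁ m₁ : Fin d) (U : Matrix.unitaryGroup (Fin d) ℂ) (i l i₁ l₁ : Fin d) : ℂ :=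
  (U : Matrix (Fin d) (Fin d) ℂ) i j * (U : Matrix (Fin d) (Fin d) ℂ) l m *
        star ((U : Matrix (Fin d) (Fin d) ℂ) i₁ j₁) *
        star ((U : Matrix (Fin d) (Fin d) ℂ) l₁ m₁)

theorem continuous_F (j m j₁ m₁ i l i₁ l₁ : Fin d) :
    Continuous (fun U => F j m j₁ m₁ U i l i₁ l₁) := by
  have h : ∀ a b : Fin d, Continuous
      (fun U : Matrix.unitaryGroup (Fin d) ℂ => (U : Matrix (Fin d) (Fin d) ℂ) a b) :=
    fun a b => (continuous_subtype_val).matrix_elem a b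
  unfold F
  exact (((h _ _).mul (h _ _)).mul (h _ _).star).mul (h _ _).star

theorem integrable_F [MeasurableSpace (Matrix.unitaryGroup (Fin d) ℂ)]
    [BorelSpace (Matrix.unitaryGroup (Fin d) ℂ)]
    (μ : Measure (Matrix.unitaryGroup (Fin d) ℂ)) [IsProbabilityMeasure μ]
    (j m j₁ m₁ i l i₁ l₁ : Fin d) :
    Integrable (fun U => F j m j₁ m₁ U i l i₁ l₁) μ := by
  refine Integrable.of_bound (continuous_F j m j₁ m₁ i l i₁ l₁).aestronglyMeasurable 1 ?_
  refine Filter.Eventually.of_forall fun U => ?_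
  have h : ∀ a b : Fin d, ‖(U : Matrix (Fin d) (Fin d) ℂ) a b‖ ≤ 1 :=
    fun a b => entry_norm_bound_of_unitary U.2 a b
  unfold F
  rw [norm_mul, norm_mul, norm_mul, norm_star, norm_star]
  exact mul_le_one₀ (mul_le_one₀ (mul_le_one₀ (h _ _) (norm_nonneg _) (h _ _)) (norm_nonneg _)
    (h _ _)) (norm_nonneg _) (h _ _)

theorem F_mul (j m j₁ m₁ : Fin d) (V U : Matrix.unitaryGroup (Fin d) ℂ) (i l i₁ l₁ : Fin d) :
    F j m j₁ m₁ (V * U) i l i₁ l₁ = ∑ a, ∑ b, ∑ c, ∑ e,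
      ((V : Matrix (Fin d) (Fin d) ℂ) i a * (V : Matrix (Fin d) (Fin d) ℂ) l b *
      star ((V : Matrix (Fin d) (Fin d) ℂ) i₁ c) * star ((V : Matrix (Fin d) (Fin d) ℂ) l₁ e)) *
      F j m j₁ m₁ U a b c e := by
  unfold F
  simp only [Submonoid.coe_mul, Matrix.mul_apply, star_sum, star_mul']
  have key : ∀ f g h k : Fin d → ℂ, (∑ a, f a) * (∑ a, g a) * (∑ a, h a) * (∑ a, k a) =
      ∑ a, ∑ b, ∑ c, ∑ e, f a * g b * h c * k e := by
    intro f g h k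
    simp only [mul_assoc, ← Finset.mul_sum, ← Finset.sum_mul]
  rw [key]
  refine Finset.sum_congr rfl fun a _ => Finset.sum_congr rfl fun b _ =>
    Finset.sum_congr rfl fun c _ => Finset.sum_congr rfl fun e _ => ?_
  ring

/-- invariance of a 4-tensor -/
def Inv (T : Fin d → Fin d → Fin d → Fin d → ℂ) : Prop :=
  ∀ V ∈ Matrix.unitaryGroup (Fin d) ℂ, ∀ i l i₁ l₁, T i l i₁ l₁ = ∑ a, ∑ b, ∑ c, ∑ e,
      (V i a * V l b * star (V i₁ c) * star (V l₁ e)) * T a b c e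

theorem inv_int [MeasurableSpace (Matrix.unitaryGroup (Fin d) ℂ)]
    [BorelSpace (Matrix.unitaryGroup (Fin d) ℂ)]
    (μ : Measure (Matrix.unitaryGroup (Fin d) ℂ)) [μ.IsHaarMeasure] [IsProbabilityMeasure μ]
    (j m j₁ m₁ : Fin d) :
    Inv (fun i l i₁ l₁ => ∫ U, F j m j₁ m₁ U i l i₁ l₁ ∂μ) := by
  intro V hV i l i₁ l₁
  beta_reduce
  have hI := integrable_F μ j m j₁ m₁
  have h := integral_mul_left_eq_self (μ := μ) (fun U => F j m j₁ m₁ U i l i₁ l₁) ⟨V, hV⟩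
  simp only [F_mul] at h
  rw [← h, integral_finsetSum]
  swap
  · intro a _
    exact integrable_finsetSum _ fun b _ => integrable_finsetSum _ fun c _ =>
      integrable_finsetSum _ fun e _ => (hI a b c e).const_mul _
  refine Finset.sum_congr rfl fun a _ => ?_
  rw [integral_finsetSum]
  swap
  · intro b _
    exact integrable_finsetSum _ fun c _ =>
      integrable_finsetSum _ fun e _ => (hI a b c e).const_mul _
  refine Finset.sum_congr rfl fun b _ => ?_
  rw [integral_finsetSum]
  swap
  · intro c _
    exact integrable_finsetSum _ fun e _ => (hI a b c e).const_mul _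
  refine Finset.sum_congr rfl fun c _ => ?_
  rw [integral_finsetSum]
  swap
  · intro e _
    exact (hI a b c e).const_mul _
  refine Finset.sum_congr rfl fun e _ => ?_
  rw [integral_const_mul]

variable {T : Fin d → Fin d → Fin d → Fin d → ℂ}

theorem Inv.diag (hT : Inv T) (k i l i₁ l₁ : Fin d) :
    T i l i₁ l₁ = ((if i = k then Complex.I else 1) * (if l = k then Complex.I else 1) *
      (if i₁ = k then -Complex.I else 1) * (if l₁ = k then -Complex.I else 1)) * T i l i₁ l₁ := by
  have hV : Matrix.diagonal (fun a : Fin d => if a = k then Complex.I else 1) ∈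
      Matrix.unitaryGroup (Fin d) ℂ := by
    rw [Matrix.mem_unitaryGroup_iff, Matrix.star_eq_conjTranspose, Matrix.diagonal_conjTranspose,
      Matrix.diagonal_mul_diagonal, ← Matrix.diagonal_one]
    congr 1
    ext a
    by_cases h : a = k <;> simp [h]
  have hs : ∀ x : Fin d, star (if x = k then Complex.I else 1) =
      if x = k then -Complex.I else 1 := by
    intro x; split_ifs <;> simp
  have h := hT _ hV i l i₁ l₁
  simp only [Matrix.diagonal_apply] at h
  rw [Finset.sum_eq_single i (by intro b _ hb; simp [hb.symm]) (by simp),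
    Finset.sum_eq_single l (by intro b _ hb; simp [hb.symm]) (by simp),
    Finset.sum_eq_single i₁ (by intro b _ hb; simp [hb.symm]) (by simp),
    Finset.sum_eq_single l₁ (by intro b _ hb; simp [hb.symm]) (by simp)] at h
  simp only [if_true, hs] at h
  exact h

theorem Inv.perm (hT : Inv T) (σ : Equiv.Perm (Fin d)) (i l i₁ l₁ : Fin d) :
    T i l i₁ l₁ = T (σ i) (σ l) (σ i₁) (σ l₁) := by
  have hV : (Matrix.of fun a b : Fin d => if b = σ a then (1 : ℂ) else 0) ∈
      Matrix.unitaryGroup (Fin d) ℂ := by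
    rw [Matrix.mem_unitaryGroup_iff]
    ext a b
    simp [Matrix.mul_apply, Matrix.star_apply, Matrix.one_apply, eq_comm]
  have h := hT _ hV i l i₁ l₁
  simp only [Matrix.of_apply] at h
  rw [Finset.sum_eq_single (σ i) (by intro b _ hb; simp [hb]) (by simp),
    Finset.sum_eq_single (σ l) (by intro b _ hb; simp [hb]) (by simp),
    Finset.sum_eq_single (σ i₁) (by intro b _ hb; simp [hb]) (by simp),
    Finset.sum_eq_single (σ l₁) (by intro b _ hb; simp [hb]) (by simp)] at h
  simpa using h

theorem Inv.supp (hT : Inv T) (i l i₁ l₁ : Fin d) (h0 : T i l i₁ l₁ ≠ 0) :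
    (i = i₁ ∧ l = l₁) ∨ (i = l₁ ∧ l = i₁) := by
  have key : ∀ k, ((if i = k then Complex.I else 1) * (if l = k then Complex.I else 1) *
      (if i₁ = k then -Complex.I else 1) * (if l₁ = k then -Complex.I else 1)) = 1 := by
    intro k
    have h := hT.diag k i l i₁ l₁
    exact mul_right_cancel₀ h0 (by rw [one_mul]; exact h.symm)
  have e1 : Complex.I ≠ 1 := by simp [Complex.ext_iff]
  have e2 : -Complex.I ≠ 1 := by simp [Complex.ext_iff]
  have e3 : (-1 : ℂ) ≠ 1 := by norm_num
  have A := key i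
  have B := key l
  have C := key i₁
  have D := key l₁
  by_cases h1 : i = i₁ <;> by_cases h2 : l = l₁ <;> by_cases h3 : i = l₁ <;>
    by_cases h4 : l = i₁ <;> by_cases h5 : i = l <;> by_cases h6 : i₁ = l₁ <;>
    simp_all [eq_comm]

theorem house (p q : Fin d) (hpq : p ≠ q) : ∃ V ∈ Matrix.unitaryGroup (Fin d) ℂ,
    V p p = 3 / 5 ∧ V p q = -4 / 5 ∧ (∀ a, a ≠ p → a ≠ q → V p a = 0) := by
  let w : Fin d → ℂ := Pi.single p 1 + Pi.single q 2
  have hww : w ⬝ᵥ w = 5 := by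
    simp only [w, add_dotProduct, dotProduct_add, single_dotProduct]
    simp [hpq, hpq.symm]
    norm_num
  have hs : star w = w := by
    ext a
    simp only [w, Pi.star_apply, Pi.add_apply, Pi.single_apply]
    split_ifs <;> simp
  refine ⟨1 - (2 / 5 : ℂ) • Matrix.vecMulVec w w, ?_, ?_, ?_, ?_⟩
  · rw [Matrix.mem_unitaryGroup_iff]
    have : star (1 - (2 / 5 : ℂ) • Matrix.vecMulVec w w) =
        1 - (2 / 5 : ℂ) • Matrix.vecMulVec w w := by
      rw [Matrix.star_eq_conjTranspose, Matrix.conjTranspose_sub, Matrix.conjTranspose_smul,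
        Matrix.conjTranspose_vecMulVec, hs, Matrix.conjTranspose_one]
      congr 2
      simp
    rw [this, sub_mul, mul_sub, mul_sub, smul_mul_smul_comm, Matrix.vecMulVec_mul_vecMulVec, hww]
    simp only [one_mul, mul_one, Matrix.smul_vecMulVec, Matrix.vecMulVec_smul]
    module
  · simp [w, Matrix.vecMulVec_apply, hpq, hpq.symm]; norm_num
  · simp [w, Matrix.vecMulVec_apply, hpq, hpq.symm]; norm_num
  · intro a h1 h2
    simp [w, Matrix.vecMulVec_apply, h1, h2, h1.symm]

theorem Inv.rot (hT : Inv T) (p q : Fin d) (hpq : p ≠ q) (hc : T q q q q = T p p p p)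
    (ha : T q p q p = T p q p q) (hb : T q p p q = T p q q p) :
    T p p p p = T p q p q + T p q q p := by
  obtain ⟨V, hV, hp, hq, h0⟩ := house p q hpq
  have h := hT V hV p p p p
  have s1 : star (3 / 5 : ℂ) = 3 / 5 := by simp
  have s2 : star (-4 / 5 : ℂ) = -4 / 5 := by simp
  have red : ∀ g : Fin d → ℂ, ∑ a, V p a * g a = 3 / 5 * g p + -4 / 5 * g q := by
    intro g
    rw [Fintype.sum_eq_add p q hpq, hp, hq]
    rintro x ⟨h1, h2⟩
    rw [h0 x h1 h2, zero_mul]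
  have red' : ∀ g : Fin d → ℂ, ∑ a, star (V p a) * g a = 3 / 5 * g p + -4 / 5 * g q := by
    intro g
    rw [Fintype.sum_eq_add p q hpq, hp, hq, s1, s2]
    rintro x ⟨h1, h2⟩
    rw [h0 x h1 h2, star_zero, zero_mul]
  simp only [mul_assoc, ← Finset.mul_sum, red, red'] at h
  have z : ∀ i l i₁ l₁ : Fin d, ¬ ((i = i₁ ∧ l = l₁) ∨ (i = l₁ ∧ l = i₁)) → T i l i₁ l₁ = 0 :=
    fun i l i₁ l₁ h' => by
      by_contra hne
      exact h' (hT.supp _ _ _ _ hne)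
  rw [z p p p q (by simp [hpq]), z p p q p (by simp [hpq]),
    z p q p p (by simp [hpq.symm]), z q p p p (by simp [hpq.symm]),
    z p p q q (by simp [hpq]), z q q p p (by simp [hpq.symm]),
    z q q q p (by simp [hpq.symm]), z q q p q (by simp [hpq.symm]),
    z q p q q (by simp [hpq]), z p q q q (by simp [hpq]), hc, ha, hb] at h
  linear_combination (625 / 288 : ℂ) * h

theorem exists_perm {x y i l : Fin d} (hxy : x ≠ y) (hil : i ≠ l) :
    ∃ σ : Equiv.Perm (Fin d), σ x = i ∧ σ y = l := by
  refine ⟨(Equiv.swap x i).trans (Equiv.swap (Equiv.swap x i y) l), ?_, ?_⟩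
  · rw [Equiv.trans_apply, Equiv.swap_apply_left]
    refine Equiv.swap_apply_of_ne_of_ne ?_ hil
    intro h
    have := congrArg (Equiv.swap x i) h
    simp at this
    exact hxy this
  · simp

theorem Inv.form (hT : Inv T) (x y : Fin d) (hxy : x ≠ y) (i l i₁ l₁ : Fin d) :
    T i l i₁ l₁ = T x y x y * (if i = i₁ ∧ l = l₁ then 1 else 0) +
      T x y y x * (if i = l₁ ∧ l = i₁ then 1 else 0) := by
  have ha : ∀ i l, i ≠ l → T i l i l = T x y x y := by
    intro i l hil
    obtain ⟨σ, h1, h2⟩ := exists_perm hxy hil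
    rw [hT.perm σ x y x y, h1, h2]
  have hb : ∀ i l, i ≠ l → T i l l i = T x y y x := by
    intro i l hil
    obtain ⟨σ, h1, h2⟩ := exists_perm hxy hil
    rw [hT.perm σ x y y x, h1, h2]
  have hc : ∀ i, T i i i i = T x y x y + T x y y x := by
    intro i
    have e : T i i i i = T x x x x := by
      have := hT.perm (Equiv.swap x i) x x x x
      simpa using this.symm
    rw [e]
    refine hT.rot x y hxy ?_ (ha _ _ hxy.symm) (hb _ _ hxy.symm)
    have := hT.perm (Equiv.swap x y) x x x x
    simpa using this.symm
  by_cases h : (i = i₁ ∧ l = l₁) ∨ (i = l₁ ∧ l = i₁)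
  · by_cases hil : i = l
    · subst hil
      have h1 : i₁ = i := by tauto
      have h2 : l₁ = i := by tauto
      subst h1 h2
      simp [hc]
    · rcases h with ⟨h1, h2⟩ | ⟨h1, h2⟩
      · subst h1 h2
        simp [hil, ha _ _ hil]
      · subst h1 h2
        simp [hil, hb _ _ hil]
  · have : T i l i₁ l₁ = 0 := by
      by_contra hne
      exact h (hT.supp _ _ _ _ hne)
    rw [this, if_neg (by tauto), if_neg (by tauto)]
    simp

theorem orth (U : Matrix.unitaryGroup (Fin d) ℂ) (j k : Fin d) :
    ∑ i, (U : Matrix (Fin d) (Fin d) ℂ) i j * star ((U : Matrix (Fin d) (Fin d) ℂ) i k) =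
      if j = k then 1 else 0 := by
  have h := congrFun (congrFun (Matrix.mem_unitaryGroup_iff'.1 U.2) k) j
  rw [Matrix.mul_apply, Matrix.one_apply] at h
  simp only [Matrix.star_apply] at h
  simp only [mul_comm, eq_comm (a := j)] at h ⊢
  exact h

theorem contr1 (j m j₁ m₁ : Fin d) (U : Matrix.unitaryGroup (Fin d) ℂ) :
    ∑ i, ∑ l, F j m j₁ m₁ U i l i l = (if j = j₁ then 1 else 0) * (if m = m₁ then 1 else 0) := by
  rw [← orth U, ← orth U, Finset.sum_mul_sum]
  refine Finset.sum_congr rfl fun a _ => Finset.sum_congr rfl fun b _ => ?_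
  unfold F; ring

theorem contr2 (j m j₁ m₁ : Fin d) (U : Matrix.unitaryGroup (Fin d) ℂ) :
    ∑ i, ∑ l, F j m j₁ m₁ U i l l i = (if j = m₁ then 1 else 0) * (if m = j₁ then 1 else 0) := by
  rw [← orth U, ← orth U, Finset.sum_mul_sum]
  refine Finset.sum_congr rfl fun a _ => Finset.sum_congr rfl fun b _ => ?_
  unfold F; ring

end HaarAux

/-- second moment (Weingarten) formula for a Haar-random unitary on `U(d)`, `d ≥ 2`:
`E[U_{ij} U_{lm} conj(U_{i₁j₁}) conj(U_{l₁m₁})]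
  = (δ_{i,i₁}δ_{l,l₁}δ_{j,j₁}δ_{m,m₁} + δ_{i,l₁}δ_{l,i₁}δ_{j,m₁}δ_{m,j₁})/(d²−1)
  − (δ_{i,i₁}δ_{l,l₁}δ_{j,m₁}δ_{m,j₁} + δ_{i,l₁}δ_{l,i₁}δ_{j,j₁}δ_{m,m₁})/(d(d²−1))`. -/
theorem haar_second_moment (d : ℕ) (hd : 2 ≤ d)
    [MeasurableSpace (Matrix.unitaryGroup (Fin d) ℂ)]
    [BorelSpace (Matrix.unitaryGroup (Fin d) ℂ)]
    (μ : Measure (Matrix.unitaryGroup (Fin d) ℂ)) [μ.IsHaarMeasure] [IsProbabilityMeasure μ]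
    (i j l m i₁ j₁ l₁ m₁ : Fin d) :
    ∫ U, (U : Matrix (Fin d) (Fin d) ℂ) i j * (U : Matrix (Fin d) (Fin d) ℂ) l m *
        star ((U : Matrix (Fin d) (Fin d) ℂ) i₁ j₁) *
        star ((U : Matrix (Fin d) (Fin d) ℂ) l₁ m₁) ∂μ
      = ((if i = i₁ ∧ l = l₁ ∧ j = j₁ ∧ m = m₁ then 1 else 0) +
          (if i = l₁ ∧ l = i₁ ∧ j = m₁ ∧ m = j₁ then 1 else 0)) / ((d : ℂ) ^ 2 - 1)
        - ((if i = i₁ ∧ l = l₁ ∧ j = m₁ ∧ m = j₁ then 1 else 0) +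
            (if i = l₁ ∧ l = i₁ ∧ j = j₁ ∧ m = m₁ then 1 else 0)) / (d * ((d : ℂ) ^ 2 - 1)) := by
  have hT := HaarAux.inv_int μ j m j₁ m₁
  have hI := HaarAux.integrable_F μ j m j₁ m₁
  have h1 : ∑ i, ∑ l, ∫ U, HaarAux.F j m j₁ m₁ U i l i l ∂μ =
      (if j = j₁ then 1 else 0) * (if m = m₁ then 1 else 0) := by
    simp_rw [← integral_finsetSum Finset.univ (fun l _ => hI _ l _ l)]
    rw [← integral_finsetSum _ (fun i _ => integrable_finsetSum _ (fun l _ => hI i l i l))]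
    simp only [HaarAux.contr1, integral_const, probReal_univ, one_smul]
  have h2 : ∑ i, ∑ l, ∫ U, HaarAux.F j m j₁ m₁ U i l l i ∂μ =
      (if j = m₁ then 1 else 0) * (if m = j₁ then 1 else 0) := by
    simp_rw [← integral_finsetSum Finset.univ (fun l _ => hI _ l l _)]
    rw [← integral_finsetSum _ (fun i _ => integrable_finsetSum _ (fun l _ => hI i l l i))]
    simp only [HaarAux.contr2, integral_const, probReal_univ, one_smul]
  have hform := hT.form (⟨0, by omega⟩ : Fin d) ⟨1, by omega⟩ (by simp)
  change ∫ U, HaarAux.F j m j₁ m₁ U i l i₁ l₁ ∂μ = _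
  generalize (∫ U, HaarAux.F j m j₁ m₁ U (⟨0, by omega⟩ : Fin d) ⟨1, by omega⟩ ⟨0, by omega⟩
    ⟨1, by omega⟩ ∂μ) = a at hform
  generalize (∫ U, HaarAux.F j m j₁ m₁ U (⟨0, by omega⟩ : Fin d) ⟨1, by omega⟩ ⟨1, by omega⟩
    ⟨0, by omega⟩ ∂μ) = b at hform
  simp only [hform] at h1 h2
  rw [hform]
  have e1 : ∀ i l : Fin d, (i = l ∧ l = i) ↔ i = l := fun i l => by
    constructor
    · exact fun h => h.1
    · exact fun h => ⟨h, h.symm⟩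
  simp only [and_self, if_true, e1, Finset.sum_add_distrib, ← Finset.mul_sum, Finset.sum_ite_eq,
    Finset.mem_univ, Finset.sum_const, Finset.card_univ, Fintype.card_fin, nsmul_eq_mul,
    mul_one] at h1 h2
  have d0 : (d : ℂ) ≠ 0 := by
    have : d ≠ 0 := by omega
    exact_mod_cast this
  have d1 : (d : ℂ) ^ 2 - 1 ≠ 0 := by
    intro h
    have h' : (d : ℂ) ^ 2 = 1 := by linear_combination h
    have h'' : d ^ 2 = 1 := by exact_mod_cast h'
    nlinarith
  have hh : ∀ p q r s : Prop, ∀ [Decidable p] [Decidable q] [Decidable r] [Decidable s],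
      (if p ∧ q ∧ r ∧ s then (1 : ℂ) else 0) =
      (if p ∧ q then 1 else 0) * ((if r then 1 else 0) * (if s then 1 else 0)) := by
    intro p q r s _ _ _ _
    by_cases p <;> by_cases q <;> by_cases r <;> by_cases s <;> simp [*]
  simp only [hh, ← h1, ← h2]
  field_simp
  ring
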